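/- Unique solvability of the scalar auxiliary-variable equation in the first-order IVS scheme (core of Theorem 3.1): let τ, M, λ, ν, ε, δ₀ > 0, β ≥ 0, γⁿ ∈ ℝ. Let φⁿ, μⁿ, pⁿ, φ₁, μ₁ : ℝ^d → ℝ and uⁿ, û₁ : ℝ^d → ℝ^d all be C², with E₁(φⁿ) + δ₀ > 0. Assume, pointwise on Ω: φ₁ + τ∇·(uⁿφⁿ) = MτΔμ₁; μ₁ = −λΔφ₁ + λβφ₁ + λF′(φⁿ); and û₁ + τ uⁿ·∇uⁿ − ντΔû₁ = −τφⁿ∇μⁿ − τγⁿ∇pⁿ; together with ∂ₙφ₁ = ∂ₙμ₁ = 0 on ∂Ω and û₁ = 0 on ∂Ω. Define A = √(E₁(φⁿ)+δ₀) − [λ(F′(φⁿ), φ₁) + τ(μ₁, ∇·(uⁿφⁿ))]/(2λ√(E₁(φⁿ)+δ₀)) − τ[(û₁, φⁿ∇μⁿ) + b(uⁿ, uⁿ, û₁) + γⁿ(∇pⁿ, û₁)]/(2λ√(E₁(φⁿ)+δ₀)). Then A = √(E₁(φⁿ)+δ₀) + [λ‖∇φ₁‖² + λβ‖φ₁‖²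 + Mτ‖∇μ₁‖² + ‖û₁‖² + ντ‖∇û₁‖²]/(2λ√(E₁(φⁿ)+δ₀)); in particular A > 0, so for every B ∈ ℝ the linear equation Aξ = B has a unique real solution ξ. -/

import Mathlib

open MeasureTheory Finset

noncomputable section

/-- Partial derivative of `f` in coordinate direction `i`. -/
def pd {d : ℕ} (i : Fin d) (f : (Fin d → ℝ) → ℝ) (x : Fin d → ℝ) : ℝ :=
  fderiv ℝ f x (Pi.single i 1)

/-- Divergence of a vector field. -/
def vdiv {d : ℕ} (u : (Fin d → ℝ) → Fin d → ℝ) (x : Fin d → ℝ) : ℝ :=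
  ∑ i, pd i (fun y => u y i) x

/-- Laplacian. -/
def lap {d : ℕ} (f : (Fin d → ℝ) → ℝ) (x : Fin d → ℝ) : ℝ :=
  ∑ i, pd i (pd i f) x

/-- Convection term `(u·∇)v`, component `i`. -/
def convect {d : ℕ} (u v : (Fin d → ℝ) → Fin d → ℝ) (x : Fin d → ℝ) (i : Fin d) : ℝ :=
  ∑ j, u x j * pd j (fun y => v y i) x

/-- Trilinear form `b(u,v,w) = ∫_Ω (u·∇v)·w dx`. -/
def trib {d : ℕ} (Ω : Set (Fin d → ℝ)) (u v w : (Fin d → ℝ) → Fin d → ℝ) : ℝ :=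
  ∫ x in Ω, ∑ i, convect u v x i * w x i

/-- Homogeneous Neumann boundary condition on the box `[a,b]`. -/
def neumannBC {d : ℕ} (a b : Fin d → ℝ) (f : (Fin d → ℝ) → ℝ) : Prop :=
  ∀ i : Fin d, ∀ x ∈ Set.Icc a b, (x i = a i ∨ x i = b i) → pd i f x = 0

/-- `F(s) = G(s) - (β/2)s²` with `G(s) = (1-s²)²/(4ε²)`. -/
def Ffun (ε β s : ℝ) : ℝ := (1 - s^2)^2 / (4 * ε^2) - (β / 2) * s^2

/-- `F′(s) = (s³ - s)/ε² - βs`. -/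
def Fprime (ε β s : ℝ) : ℝ := (s^3 - s) / ε^2 - β * s

/-- `E₁(φ) = ∫_Ω F(φ) dx`. -/
def E1 {d : ℕ} (Ω : Set (Fin d → ℝ)) (ε β : ℝ) (φ : (Fin d → ℝ) → ℝ) : ℝ :=
  ∫ x in Ω, Ffun ε β (φ x)

/-!
Testing the `φ₁`-equation with `μ₁`, the `μ₁`-equation with `φ₁` and the `û₁`-equation with `û₁`
cancels the cross term `(μ₁, φ₁)`. The boundary conditions remove every boundary term in Green's
identity `(f, Δf) = -‖∇f‖²`, so what is subtracted in the definition of `A` is minus a sum of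
squares.
-/

section PartialDerivatives

variable {d : ℕ} {f : (Fin d → ℝ) → ℝ}

theorem contDiff_pd {m n : WithTop ℕ∞} (hf : ContDiff ℝ n f) (hmn : m + 1 ≤ n) (i : Fin d) :
    ContDiff ℝ m (pd i f) :=
  (hf.fderiv_right hmn).clm_apply contDiff_const

theorem continuous_pd (hf : ContDiff ℝ 1 f) (i : Fin d) : Continuous (pd i f) :=
  (contDiff_pd (m := 0) hf (by norm_num) i).continuous

theorem continuous_vdiv {u : (Fin d → ℝ) → Fin d → ℝ} (hu : ContDiff ℝ 1 u) :
    Continuous (vdiv u) :=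
  continuous_finsetSum _ fun i _ => continuous_pd (contDiff_pi.1 hu i) i

theorem contDiff_grad {m n : WithTop ℕ∞} (hf : ContDiff ℝ n f) (hmn : m + 1 ≤ n) :
    ContDiff ℝ m (fun x i => pd i f x) :=
  contDiff_pi.2 fun i => contDiff_pd hf hmn i

theorem continuous_lap (hf : ContDiff ℝ 2 f) : Continuous (lap f) :=
  continuous_vdiv (contDiff_grad hf (by norm_num))

theorem continuous_convect {u v : (Fin d → ℝ) → Fin d → ℝ} (hu : Continuous u)
    (hv : ContDiff ℝ 1 v) : Continuous (convect u v) :=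
  continuous_pi fun i => continuous_finsetSum _ fun j _ =>
    (continuous_pi_iff.1 hu j).mul (continuous_pd (contDiff_pi.1 hv i) j)

theorem pd_mul {g : (Fin d → ℝ) → ℝ} {x : Fin d → ℝ} (hf : DifferentiableAt ℝ f x)
    (hg : DifferentiableAt ℝ g x) (i : Fin d) :
    pd i (fun y => f y * g y) x = f x * pd i g x + pd i f x * g x := by
  simp only [pd, fderiv_fun_mul hf hg, add_apply, smul_apply, smul_eq_mul, mul_comm (g x)]

theorem vdiv_mul {u : (Fin d → ℝ) → Fin d → ℝ} {x : Fin d → ℝ} (hf : DifferentiableAt ℝ f x)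
    (hu : DifferentiableAt ℝ u x) :
    vdiv (fun y i => f y * u y i) x = f x * vdiv u x + ∑ i, pd i f x * u x i := by
  simp only [vdiv, pd_mul hf (differentiableAt_pi.1 hu _), sum_add_distrib, mul_sum]

end PartialDerivatives

section IntegrationByParts

variable {d : ℕ} {a b : Fin d → ℝ}

/-- The normal component of the vector field `u` vanishes on every face of the box `[a, b]`. In
particular `neumannBC a b f` is, by definition, `NoFlux a b (∇f)`. -/
def NoFlux (a b : Fin d → ℝ) (u : (Fin d → ℝ) → Fin d → ℝ) : Prop :=
  ∀ i : Fin d, ∀ x ∈ Set.Icc a b, (x i = a i ∨ x i = b i) → u x i = 0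

theorem mem_frontier_Icc_of_eq_or_eq {x : Fin d → ℝ} {i : Fin d} (hx : x ∈ Set.Icc a b)
    (hxi : x i = a i ∨ x i = b i) : x ∈ frontier (Set.Icc a b) := by
  refine ⟨subset_closure hx, fun hint => ?_⟩
  rw [← Set.pi_univ_Icc, interior_pi_set Set.finite_univ] at hint
  have hmem : x i ∈ Set.Ioo (a i) (b i) := interior_Icc (a := a i) ▸ hint i (Set.mem_univ i)
  exact hxi.elim hmem.1.ne' hmem.2.ne

theorem NoFlux.setIntegral_face_eq_zero {n : ℕ} {a b : Fin (n + 1) → ℝ}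
    {u : (Fin (n + 1) → ℝ) → Fin (n + 1) → ℝ} (hu : NoFlux a b u) (hab : a ≤ b)
    (i : Fin (n + 1)) {c : ℝ} (hc : c = a i ∨ c = b i) :
    ∫ y in Set.Icc (a ∘ i.succAbove) (b ∘ i.succAbove), u (i.insertNth c y) i = 0 := by
  refine setIntegral_eq_zero_of_forall_eq_zero fun y hy => ?_
  have hcmem : c ∈ Set.Icc (a i) (b i) := by
    rcases hc with rfl | rfl
    exacts [Set.left_mem_Icc.2 (hab i), Set.right_mem_Icc.2 (hab i)]
  exact hu i _ (Fin.insertNth_mem_Icc.2 ⟨hcmem, hy⟩) (by simpa only [Fin.insertNth_apply_same])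

theorem NoFlux.integral_vdiv_eq_zero {u : (Fin d → ℝ) → Fin d → ℝ} (hflux : NoFlux a b u)
    (hu : ContDiff ℝ 1 u) : ∫ x in Set.Icc a b, vdiv u x = 0 := by
  by_cases hab : a ≤ b
  swap
  · rw [Set.Icc_eq_empty hab, setIntegral_empty]
  cases d with
  | zero => simp only [vdiv, univ_eq_empty, sum_empty, integral_zero]
  | succ n =>
    have hdiv := integral_divergence_of_hasFDerivAt_off_countable' a b hab
      (fun i x => u x i) (fun i x => fderiv ℝ (fun y => u y i) x) ∅ Set.countable_empty
      (fun i => (contDiff_pi.1 hu i).continuous.continuousOn)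
      (fun x _ i => ((contDiff_pi.1 hu i).differentiable one_ne_zero x).hasFDerivAt)
      (continuous_vdiv hu).integrableOn_Icc
    refine hdiv.trans (sum_eq_zero fun i _ => ?_)
    rw [hflux.setIntegral_face_eq_zero hab i (.inr rfl),
      hflux.setIntegral_face_eq_zero hab i (.inl rfl), sub_zero]

theorem integral_mul_vdiv {f : (Fin d → ℝ) → ℝ} {u : (Fin d → ℝ) → Fin d → ℝ}
    (hf : ContDiff ℝ 1 f) (hu : ContDiff ℝ 1 u) (hflux : NoFlux a b fun x i => f x * u x i) :
    ∫ x in Set.Icc a b, f x * vdiv u x = -∫ x in Set.Icc a b, ∑ i, pd i f x * u x i := by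
  have hui := contDiff_pi.1 hu
  have hdiv := hflux.integral_vdiv_eq_zero (contDiff_pi.2 fun i => hf.mul (hui i))
  simp only [vdiv_mul (hf.differentiable one_ne_zero _) (hu.differentiable one_ne_zero _)] at hdiv
  have hint_vdiv : IntegrableOn (fun x => f x * vdiv u x) (Set.Icc a b) :=
    (hf.continuous.mul (continuous_vdiv hu)).integrableOn_Icc
  have hint_grad : IntegrableOn (fun x => ∑ i, pd i f x * u x i) (Set.Icc a b) :=
    (continuous_finsetSum _ fun i _ =>
      (continuous_pd hf i).mul (hui i).continuous).integrableOn_Icc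
  rw [integral_add hint_vdiv hint_grad] at hdiv
  exact eq_neg_of_add_eq_zero_left hdiv

theorem integral_mul_lap_self {f : (Fin d → ℝ) → ℝ} (hf : ContDiff ℝ 2 f)
    (hflux : NoFlux a b fun x i => f x * pd i f x) :
    ∫ x in Set.Icc a b, f x * lap f x = -∫ x in Set.Icc a b, ∑ i, (pd i f x) ^ 2 := by
  simp only [pow_two]
  exact integral_mul_vdiv (hf.of_le one_le_two) (contDiff_grad hf (by norm_num)) hflux

theorem integral_mul_lap_self_of_neumannBC {f : (Fin d → ℝ) → ℝ} (hf : ContDiff ℝ 2 f)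
    (hbc : neumannBC a b f) :
    ∫ x in Set.Icc a b, f x * lap f x = -∫ x in Set.Icc a b, ∑ i, (pd i f x) ^ 2 :=
  integral_mul_lap_self hf fun i x hx hxi => mul_eq_zero_of_right _ (hbc i x hx hxi)

theorem integral_mul_lap_self_of_eq_zero_on_frontier {f : (Fin d → ℝ) → ℝ}
    (hf : ContDiff ℝ 2 f) (hbc : ∀ x ∈ frontier (Set.Icc a b), f x = 0) :
    ∫ x in Set.Icc a b, f x * lap f x = -∫ x in Set.Icc a b, ∑ i, (pd i f x) ^ 2 :=
  integral_mul_lap_self hf fun _ x hx hxi =>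
    mul_eq_zero_of_left (hbc x (mem_frontier_Icc_of_eq_or_eq hx hxi)) _

end IntegrationByParts

section EnergyIdentities

variable {d : ℕ} {a b : Fin d → ℝ}

theorem cahnHilliard_energy_identity {lam κ c : ℝ} {φ μ f s : (Fin d → ℝ) → ℝ}
    (hφ : ContDiff ℝ 2 φ) (hμ : ContDiff ℝ 2 μ)
    (hφeq : ∀ x ∈ Set.Icc a b, φ x + s x = κ * lap μ x)
    (hμeq : ∀ x ∈ Set.Icc a b, μ x = -lam * lap φ x + c * φ x + f x)
    (hφbc : neumannBC a b φ) (hμbc : neumannBC a b μ) :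
    (∫ x in Set.Icc a b, f x * φ x) + ∫ x in Set.Icc a b, μ x * s x =
      -(lam * (∫ x in Set.Icc a b, ∑ i, (pd i φ x) ^ 2) + c * (∫ x in Set.Icc a b, φ x ^ 2)
        + κ * ∫ x in Set.Icc a b, ∑ i, (pd i μ x) ^ 2) := by
  have cφ := hφ.continuous
  have cμ := hμ.continuous
  have clφ := continuous_lap hφ
  have clμ := continuous_lap hμ
  have test_φ : ∫ x in Set.Icc a b, f x * φ x = (∫ x in Set.Icc a b, μ x * φ x)
      + lam * (∫ x in Set.Icc a b, φ x * lap φ x) - c * ∫ x in Set.Icc a b, φ x ^ 2 := by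
    rw [← integral_const_mul, ← integral_const_mul,
      ← integral_add (Continuous.integrableOn_Icc (by fun_prop))
        (Continuous.integrableOn_Icc (by fun_prop)),
      ← integral_sub (Continuous.integrableOn_Icc (by fun_prop))
        (Continuous.integrableOn_Icc (by fun_prop))]
    refine setIntegral_congr_fun measurableSet_Icc fun x hx => ?_
    linear_combination -φ x * hμeq x hx
  have test_μ : ∫ x in Set.Icc a b, μ x * s x =
      κ * (∫ x in Set.Icc a b, μ x * lap μ x) - ∫ x in Set.Icc a b, μ x * φ x := by
    rw [← integral_const_mul, ← integral_sub (Continuous.integrableOn_Icc (by fun_prop))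
      (Continuous.integrableOn_Icc (by fun_prop))]
    refine setIntegral_congr_fun measurableSet_Icc fun x hx => ?_
    linear_combination μ x * hφeq x hx
  rw [test_φ, test_μ, integral_mul_lap_self_of_neumannBC hφ hφbc,
    integral_mul_lap_self_of_neumannBC hμ hμbc]
  ring

theorem integral_sum_mul_lap_self {w : (Fin d → ℝ) → Fin d → ℝ} (hw : ContDiff ℝ 2 w)
    (hbc : ∀ x ∈ frontier (Set.Icc a b), w x = 0) :
    ∫ x in Set.Icc a b, ∑ i, w x i * lap (fun y => w y i) x =
      -∫ x in Set.Icc a b, ∑ i, ∑ j, (pd j (fun y => w y i) x) ^ 2 := by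
  have hwi := contDiff_pi.1 hw
  have hint_lap (i : Fin d) :
      IntegrableOn (fun x => w x i * lap (fun y => w y i) x) (Set.Icc a b) :=
    ((hwi i).continuous.mul (continuous_lap (hwi i))).integrableOn_Icc
  have hint_grad (i : Fin d) :
      IntegrableOn (fun x => ∑ j, (pd j (fun y => w y i) x) ^ 2) (Set.Icc a b) :=
    (continuous_finsetSum _ fun j _ =>
      (continuous_pd ((hwi i).of_le one_le_two) j).pow 2).integrableOn_Icc
  rw [integral_finsetSum _ fun i _ => hint_lap i, integral_finsetSum _ fun i _ => hint_grad i,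
    ← sum_neg_distrib]
  exact sum_congr rfl fun i _ => integral_mul_lap_self_of_eq_zero_on_frontier (hwi i)
    fun x hx => congrFun (hbc x hx) i

theorem viscous_energy_identity {κ : ℝ} {w f : (Fin d → ℝ) → Fin d → ℝ} (hw : ContDiff ℝ 2 w)
    (heq : ∀ x ∈ Set.Icc a b, ∀ i, w x i + f x i = κ * lap (fun y => w y i) x)
    (hbc : ∀ x ∈ frontier (Set.Icc a b), w x = 0) :
    ∫ x in Set.Icc a b, ∑ i, w x i * f x i =
      -((∫ x in Set.Icc a b, ∑ i, (w x i) ^ 2)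
        + κ * ∫ x in Set.Icc a b, ∑ i, ∑ j, (pd j (fun y => w y i) x) ^ 2) := by
  have cw := fun i => (contDiff_pi.1 hw i).continuous
  have cl := fun i => continuous_lap (contDiff_pi.1 hw i)
  have test_w : ∫ x in Set.Icc a b, ∑ i, w x i * f x i =
      κ * (∫ x in Set.Icc a b, ∑ i, w x i * lap (fun y => w y i) x)
        - ∫ x in Set.Icc a b, ∑ i, (w x i) ^ 2 := by
    rw [← integral_const_mul, ← integral_sub (Continuous.integrableOn_Icc (by fun_prop))
      (Continuous.integrableOn_Icc (by fun_prop))]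
    refine setIntegral_congr_fun measurableSet_Icc fun x hx => ?_
    simp only [mul_sum, ← sum_sub_distrib]
    exact sum_congr rfl fun i _ => by linear_combination w x i * heq x hx i
  rw [test_w, integral_sum_mul_lap_self hw hbc]
  ring

theorem integral_sum_mul_linearCombination {f g h w : (Fin d → ℝ) → Fin d → ℝ} (hf : Continuous f)
    (hg : Continuous g) (hh : Continuous h) (hw : Continuous w) (τ γ : ℝ) :
    ∫ x in Set.Icc a b, ∑ i, w x i * (τ * (f x i + g x i + γ * h x i)) =
      τ * ((∫ x in Set.Icc a b, ∑ i, w x i * f x i) + (∫ x in Set.Icc a b, ∑ i, g x i * w x i)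
        + γ * ∫ x in Set.Icc a b, ∑ i, h x i * w x i) := by
  rw [← integral_const_mul γ, ← integral_add (Continuous.integrableOn_Icc (by fun_prop))
      (Continuous.integrableOn_Icc (by fun_prop)),
    ← integral_add (Continuous.integrableOn_Icc (by fun_prop))
      (Continuous.integrableOn_Icc (by fun_prop)), ← integral_const_mul]
  congr 1 with x
  simp only [mul_sum, ← sum_add_distrib]
  exact sum_congr rfl fun i _ => by ring

end EnergyIdentities

/-- Here `f` plays the role of `F′(φⁿ)` and `r` that of `√(E₁(φⁿ) + δ₀)`. -/
theorem stmt4_general {d : ℕ} {a b : Fin d → ℝ} {τ M lam ν β γn : ℝ}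
    (hτ : 0 ≤ τ) (hM : 0 ≤ M) (hlam : 0 < lam) (hν : 0 ≤ ν) (hβ : 0 ≤ β)
    {f φn μn pn φ1 μ1 : (Fin d → ℝ) → ℝ} {un uhat1 : (Fin d → ℝ) → Fin d → ℝ}
    (hφn : ContDiff ℝ 1 φn) (hμn : ContDiff ℝ 1 μn) (hpn : ContDiff ℝ 1 pn)
    (hφ1 : ContDiff ℝ 2 φ1) (hμ1 : ContDiff ℝ 2 μ1)
    (hun : ContDiff ℝ 1 un) (huhat1 : ContDiff ℝ 2 uhat1)
    (heq1 : ∀ x ∈ Set.Icc a b,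
      φ1 x + τ * vdiv (fun y i => un y i * φn y) x = M * τ * lap μ1 x)
    (heq2 : ∀ x ∈ Set.Icc a b,
      μ1 x = -lam * lap φ1 x + lam * β * φ1 x + lam * f x)
    (heq3 : ∀ x ∈ Set.Icc a b, ∀ i : Fin d,
      uhat1 x i + τ * convect un un x i - ν * τ * lap (fun y => uhat1 y i) x
        = -τ * (φn x * pd i μn x) - τ * γn * pd i pn x)
    (hφbc : neumannBC a b φ1) (hμbc : neumannBC a b μ1)
    (huhatbc : ∀ x ∈ frontier (Set.Icc a b), uhat1 x = 0)
    {r A : ℝ} (hr : 0 < r)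
    (hA : A = r
      - (lam * (∫ x in Set.Icc a b, f x * φ1 x)
          + τ * (∫ x in Set.Icc a b, μ1 x * vdiv (fun y i => un y i * φn y) x))
        / (2 * lam * r)
      - τ * ((∫ x in Set.Icc a b, ∑ i, uhat1 x i * (φn x * pd i μn x))
          + trib (Set.Icc a b) un un uhat1
          + γn * (∫ x in Set.Icc a b, ∑ i, pd i pn x * uhat1 x i))
        / (2 * lam * r)) :
    A = r
      + (lam * (∫ x in Set.Icc a b, ∑ i, (pd i φ1 x)^2)
          + lam * β * (∫ x in Set.Icc a b, (φ1 x)^2)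
          + M * τ * (∫ x in Set.Icc a b, ∑ i, (pd i μ1 x)^2)
          + (∫ x in Set.Icc a b, ∑ i, (uhat1 x i)^2)
          + ν * τ * (∫ x in Set.Icc a b, ∑ i, ∑ j, (pd j (fun y => uhat1 y i) x)^2))
        / (2 * lam * r)
    ∧ 0 < A
    ∧ ∀ B : ℝ, ∃! ξ : ℝ, A * ξ = B := by
  have phase := cahnHilliard_energy_identity (f := fun x => lam * f x)
    (s := fun x => τ * vdiv (fun y i => un y i * φn y) x) hφ1 hμ1 heq1 heq2 hφbc hμbc
  simp only [mul_assoc lam, mul_left_comm _ τ, integral_const_mul] at phase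
  have velocity := viscous_energy_identity (κ := ν * τ)
    (f := fun x i => τ * (φn x * pd i μn x + convect un un x i + γn * pd i pn x)) huhat1
    (fun x hx i => by linear_combination heq3 x hx i) huhatbc
  have work := integral_sum_mul_linearCombination (a := a) (b := b)
    (f := fun x i => φn x * pd i μn x) (h := fun x i => pd i pn x)
    (continuous_pi fun i => hφn.continuous.mul (continuous_pd hμn i))
    (continuous_convect hun.continuous hun) (continuous_pi (continuous_pd hpn))
    huhat1.continuous τ γn
  simp only [trib, ← work, velocity, phase, neg_div, sub_neg_eq_add] at hA
  have hA_pos : 0 < A := by rw [hA]; positivity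
  exact ⟨by rw [hA]; ring, hA_pos, (mulLeft_bijective₀ A hA_pos.ne').existsUnique⟩

/-- Unique solvability of the scalar auxiliary-variable equation of the first-order
IVS scheme (core of Theorem 3.1). -/
theorem stmt4 (d : ℕ) (hd : 1 ≤ d) (a b : Fin d → ℝ) (hab : ∀ i, a i < b i)
    (Ω : Set (Fin d → ℝ)) (hΩ : Ω = Set.Icc a b)
    (τ M lam ν ε δ₀ β γn : ℝ)
    (hτ : 0 < τ) (hM : 0 < M) (hlam : 0 < lam) (hν : 0 < ν) (hε : 0 < ε)
    (hδ₀ : 0 < δ₀) (hβ : 0 ≤ β)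
    (φn μn pn φ1 μ1 : (Fin d → ℝ) → ℝ) (un uhat1 : (Fin d → ℝ) → Fin d → ℝ)
    (hφn : ContDiff ℝ 2 φn) (hμn : ContDiff ℝ 2 μn) (hpn : ContDiff ℝ 2 pn)
    (hφ1 : ContDiff ℝ 2 φ1) (hμ1 : ContDiff ℝ 2 μ1)
    (hun : ContDiff ℝ 2 un) (huhat1 : ContDiff ℝ 2 uhat1)
    (hE1pos : 0 < E1 Ω ε β φn + δ₀)
    (heq1 : ∀ x ∈ Ω,
      φ1 x + τ * vdiv (fun y i => un y i * φn y) x = M * τ * lap μ1 x)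
    (heq2 : ∀ x ∈ Ω,
      μ1 x = -lam * lap φ1 x + lam * β * φ1 x + lam * Fprime ε β (φn x))
    (heq3 : ∀ x ∈ Ω, ∀ i : Fin d,
      uhat1 x i + τ * convect un un x i - ν * τ * lap (fun y => uhat1 y i) x
        = -τ * (φn x * pd i μn x) - τ * γn * pd i pn x)
    (hφbc : neumannBC a b φ1) (hμbc : neumannBC a b μ1)
    (huhatbc : ∀ x ∈ frontier Ω, uhat1 x = 0)
    (A : ℝ)
    (hA : A = Real.sqrt (E1 Ω ε β φn + δ₀)
      - (lam * (∫ x in Ω, Fprime ε β (φn x) * φ1 x)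
          + τ * (∫ x in Ω, μ1 x * vdiv (fun y i => un y i * φn y) x))
        / (2 * lam * Real.sqrt (E1 Ω ε β φn + δ₀))
      - τ * ((∫ x in Ω, ∑ i, uhat1 x i * (φn x * pd i μn x))
          + trib Ω un un uhat1
          + γn * (∫ x in Ω, ∑ i, pd i pn x * uhat1 x i))
        / (2 * lam * Real.sqrt (E1 Ω ε β φn + δ₀))) :
    A = Real.sqrt (E1 Ω ε β φn + δ₀)
      + (lam * (∫ x in Ω, ∑ i, (pd i φ1 x)^2) + lam * β * (∫ x in Ω, (φ1 x)^2)
          + M * τ * (∫ x in Ω, ∑ i, (pd i μ1 x)^2)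
          + (∫ x in Ω, ∑ i, (uhat1 x i)^2)
          + ν * τ * (∫ x in Ω, ∑ i, ∑ j, (pd j (fun y => uhat1 y i) x)^2))
        / (2 * lam * Real.sqrt (E1 Ω ε β φn + δ₀))
    ∧ 0 < A
    ∧ ∀ B : ℝ, ∃! ξ : ℝ, A * ξ = B := by
  subst hΩ
  exact stmt4_general hτ.le hM.le hlam hν.le hβ (hφn.of_le one_le_two) (hμn.of_le one_le_two)
    (hpn.of_le one_le_two) hφ1 hμ1 (hun.of_le one_le_two) huhat1 heq1 heq2 heq3 hφbc hμbc huhatbc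
    (Real.sqrt_pos.2 hE1pos) hA
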